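/- Let x ∈ ℕ^6 be nondecreasing with odd coordinate sum satisfying E(x): x_2 ≡ x_1, x_4 ≡ x_3, and x_5 ≡ x_4 + x_1 (mod 2). If x' is obtained from x by a move decreasing two positive coordinates by 1 each and reordering to nondecreasing order, then E(x') fails. -/

import Mathlib

/-- The parity condition `E`: `x₂ ≡ x₁`, `x₄ ≡ x₃`, `x₅ ≡ x₄ + x₁ (mod 2)`. -/
def condE (x : Fin 6 → ℕ) : Prop :=
  x 1 % 2 = x 0 % 2 ∧ x 3 % 2 = x 2 % 2 ∧ x 4 % 2 = (x 3 + x 0) % 2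

/-!
Undoing the re-sorting costs nothing: if both `x` and its re-sorted successor `x'` are
nondecreasing, then `x' ≤ x ≤ x' + 1` coordinatewise, so `x'` also arises from `x` by decreasing
the coordinates of some two-element set `T` *in place*. Taking the difference of the congruences
`E(x)` and `E(x')`, the indicator vector of `T` has the form `(a, a, b, b, a xor b, c)`, hence
weight at most one if `a = b = 0` and at least three otherwise, never two.
-/

section Sorting

variable {α β : Type*} [LinearOrder α] [LocallyFiniteOrderTop α] [Preorder β]

theorem exists_ge_apply_le_of_injective {φ : α → α} (hφ : Function.Injective φ) (a : α) :
    ∃ b, a ≤ b ∧ φ b ≤ a := by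
  by_contra! h
  have card_le : (Finset.Ici a).card ≤ (Finset.Ioi a).card :=
    Finset.card_le_card_of_injOn φ (fun b hb ↦ by simpa using h b (by simpa using hb)) hφ.injOn
  have card_lt : (Finset.Ioi a).card < (Finset.Ici a).card := by
    rw [← Finset.Ici_erase]
    exact Finset.card_erase_lt_of_mem (Finset.mem_Ici.2 le_rfl)
  exact card_le.not_gt card_lt

theorem le_of_monotone_of_le_comp_injective {f g : α → β} (hf : Monotone f) (hg : Monotone g)
    {φ : α → α} (hφ : Function.Injective φ) (h : f ≤ g ∘ φ) : f ≤ g := by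
  intro a
  obtain ⟨b, hab, hba⟩ := exists_ge_apply_le_of_injective hφ a
  calc
    f a ≤ f b := hf hab
    _ ≤ g (φ b) := h b
    _ ≤ g a := hg hba

end Sorting

/-- `IsMove S x y` says that `y` arises from `x` by a move at `S`: every coordinate in `S` is
decreased by one, without re-sorting. The additive form avoids truncated subtraction and forces
`x` to be positive on `S`. -/
def IsMove {ι : Type*} [DecidableEq ι] (S : Finset ι) (x y : ι → ℕ) : Prop :=
  ∀ t, x t = y t + if t ∈ S then 1 else 0

namespace IsMove

section DecidableEq

variable {ι : Type*} [DecidableEq ι] {S : Finset ι} {x y : ι → ℕ}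

theorem le (h : IsMove S x y) : y ≤ x := fun t ↦ by
  rw [h t]
  exact Nat.le_add_right _ _

theorem le_add_one (h : IsMove S x y) : x ≤ y + 1 := fun t ↦ by
  rw [h t]
  exact Nat.add_le_add_left (by split_ifs <;> simp) _

theorem sum_eq [Fintype ι] (h : IsMove S x y) : ∑ t, x t = ∑ t, y t + S.card := by
  simp [h _, Finset.sum_add_distrib]

theorem mem_iff_mod_two_ne (h : IsMove S x y) {t : ι} : t ∈ S ↔ x t % 2 ≠ y t % 2 := by
  rw [h t]
  by_cases ht : t ∈ S <;> simp only [ht, if_true, if_false, true_iff, false_iff] <;> omega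

theorem of_le_of_le_add_one [Fintype ι] (hyx : y ≤ x) (hxy : x ≤ y + 1) :
    IsMove {t | y t < x t} x y := by
  intro t
  have lower : y t ≤ x t := hyx t
  have upper : x t ≤ y t + 1 := hxy t
  simp only [Finset.mem_filter_univ]
  split_ifs <;> omega

end DecidableEq

theorem exists_card_eq_of_monotone_comp {ι : Type*} [LinearOrder ι] [Finite ι]
    {S : Finset ι} {x y : ι → ℕ} (h : IsMove S x y) (hx : Monotone x)
    (σ : Equiv.Perm ι) (hy : Monotone (y ∘ σ)) :
    ∃ T : Finset ι, T.card = S.card ∧ IsMove T x (y ∘ σ) := by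
  let := Fintype.ofFinite ι
  let := LocallyFiniteOrderTop.ofIci ι (fun a ↦ {b | a ≤ b}) (by simp)
  have lower : y ∘ σ ≤ x :=
    le_of_monotone_of_le_comp_injective hy hx σ.injective fun t ↦ h.le (σ t)
  have upper : x ≤ y ∘ σ + 1 :=
    le_of_monotone_of_le_comp_injective hx (hy.add_const 1) σ.symm.injective fun t ↦ by
      simpa using h.le_add_one t
  have hT := of_le_of_le_add_one lower upper
  refine ⟨_, ?_, hT⟩
  have sum_comp : ∑ t, (y ∘ σ) t = ∑ t, y t := Equiv.sum_comp σ y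
  have := h.sum_eq
  have := hT.sum_eq
  omega

theorem mem_iff_of_condE {T : Finset (Fin 6)} {x y : Fin 6 → ℕ} (h : IsMove T x y)
    (hx : condE x) (hy : condE y) :
    (1 ∈ T ↔ 0 ∈ T) ∧ (3 ∈ T ↔ 2 ∈ T) ∧ (4 ∈ T ↔ Xor (0 ∈ T) (2 ∈ T)) := by
  obtain ⟨hx10, hx32, hx4⟩ := hx
  obtain ⟨hy10, hy32, hy4⟩ := hy
  simp only [h.mem_iff_mod_two_ne, Xor]
  refine ⟨?_, ?_, ?_⟩ <;> omega

end IsMove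

theorem card_le_one_or_three_le_card {T : Finset (Fin 6)} (h10 : 1 ∈ T ↔ 0 ∈ T)
    (h32 : 3 ∈ T ↔ 2 ∈ T) (h4 : 4 ∈ T ↔ Xor (0 ∈ T) (2 ∈ T)) : T.card ≤ 1 ∨ 3 ≤ T.card := by
  by_cases h0 : 0 ∈ T <;> by_cases h2 : 2 ∈ T
  · have subset : {0, 1, 2} ⊆ T := by simp [Finset.insert_subset_iff, *]
    exact .inr (Finset.card_le_card subset)
  · have subset : {0, 1, 4} ⊆ T := by simp [Finset.insert_subset_iff, *]
    exact .inr (Finset.card_le_card subset)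
  · have subset : {2, 3, 4} ⊆ T := by simp [Finset.insert_subset_iff, *]
    exact .inr (Finset.card_le_card subset)
  · have subset : T ⊆ {5} := by
      intro t ht
      fin_cases t <;> simp_all
    exact .inl (Finset.card_le_card subset)

theorem E_breaks_after_move_general (x x' : Fin 6 → ℕ) (i j : Fin 6)
    (hmono : Monotone x) (hE : condE x)
    (hij : i ≠ j) (hi : 0 < x i) (hj : 0 < x j)
    (σ : Equiv.Perm (Fin 6))
    (hmove : ∀ t, x' t = if σ t = i ∨ σ t = j then x (σ t) - 1 else x (σ t))
    (hmono' : Monotone x') :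
    ¬ condE x' := by
  intro hE'
  let y : Fin 6 → ℕ := fun t ↦ if t = i ∨ t = j then x t - 1 else x t
  obtain rfl : x' = y ∘ σ := funext hmove
  have move : IsMove {i, j} x y := by
    intro t
    simp only [y, Finset.mem_insert, Finset.mem_singleton]
    grind
  obtain ⟨T, hcard, hT⟩ := move.exists_card_eq_of_monotone_comp hmono σ hmono'
  obtain ⟨h10, h32, h4⟩ := hT.mem_iff_of_condE hE hE'
  have card_eq_two : T.card = 2 := hcard.trans (Finset.card_pair hij)
  have := card_le_one_or_three_le_card h10 h32 h4
  omega

/-- If a nondecreasing `x ∈ ℕ⁶` with odd sum satisfies `E`, and `x'` is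
obtained from `x` by a move (decreasing two positive coordinates by one each)
followed by re-sorting into nondecreasing order, then `E(x')` fails. -/
theorem E_breaks_after_move (x x' : Fin 6 → ℕ) (i j : Fin 6)
    (hmono : Monotone x) (hsum : Odd (∑ t, x t)) (hE : condE x)
    (hij : i ≠ j) (hi : 0 < x i) (hj : 0 < x j)
    (σ : Equiv.Perm (Fin 6))
    (hmove : ∀ t, x' t = if σ t = i ∨ σ t = j then x (σ t) - 1 else x (σ t))
    (hmono' : Monotone x') :
    ¬ condE x' :=
  E_breaks_after_move_general x x' i j hmono hE hij hi hj σ hmove hmono'
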